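/- Let D be a digraph with m arcs and minimum outdegree d ≥ 4, let X, Y be a partition of V(D) with e(X) = 0, set θ := min{|θ(X₁,X₂)| : X₁,X₂ a partition of X} and X' := {x ∈ X : s(x) ≥ θ}, and let g := Σ_{x∈X∖X'} s(x). Let ε > 0 and suppose every y ∈ Y satisfies d(y) ≤ ε²m/4. Then either there exists a bipartition V(D) = V₁ ∪ V₂ with min{e(V₁,V₂), e(V₂,V₁)} ≥ ((d−1)/(2(2d−1)) − ε)·m, or |X'| = 2k+1 for some integer k ≥ 0 and, writing X' = {v₁,…,v_{2k+1}} with s(v₁) ≥ s(v₂) ≥ … ≥ s(v_{2k+1}), one has Σ_{j=k+1}^{2k+1} s(vⱼ) − Σ_{j=1}^{k} s(vⱼ) ≥ g + θ. -/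

import Mathlib

open Finset

/-- Number of arcs of the digraph `A` directed from a vertex of `S` to a vertex of `T`. -/
def dArcs {V : Type} [Fintype V] [DecidableEq V] (A : V → V → Prop) [DecidableRel A]
    (S T : Finset V) : ℕ :=
  ((S ×ˢ T).filter fun p => A p.1 p.2).card

/-- Outdegree of `x`. -/
def outDeg {V : Type} [Fintype V] (A : V → V → Prop) [DecidableRel A] (x : V) : ℕ :=
  (Finset.univ.filter fun y => A x y).card

/-- Indegree of `x`. -/
def inDeg {V : Type} [Fintype V] (A : V → V → Prop) [DecidableRel A] (x : V) : ℕ :=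
  (Finset.univ.filter fun y => A y x).card

/-- Degree of `x`: outdegree plus indegree. -/
def deg {V : Type} [Fintype V] (A : V → V → Prop) [DecidableRel A] (x : V) : ℕ :=
  outDeg A x + inDeg A x

/-- `s(x) = max{d⁺(x) − d⁻(x), d⁻(x) − d⁺(x)}`. -/
def sVal {V : Type} [Fintype V] (A : V → V → Prop) [DecidableRel A] (x : V) : ℤ :=
  max ((outDeg A x : ℤ) - (inDeg A x : ℤ)) ((inDeg A x : ℤ) - (outDeg A x : ℤ))

/-- The gap `θ(X₁,X₂) = (e(X₁,Y)+e(Y,X₂)) − (e(X₂,Y)+e(Y,X₁))`. -/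
def gap {V : Type} [Fintype V] [DecidableEq V] (A : V → V → Prop) [DecidableRel A]
    (X₁ X₂ Y : Finset V) : ℤ :=
  ((dArcs A X₁ Y : ℤ) + (dArcs A Y X₂ : ℤ)) - ((dArcs A X₂ Y : ℤ) + (dArcs A Y X₁ : ℤ))

section Signs

variable {V : Type} [DecidableEq V]

/-- Signs on `T` can be chosen greedily, each opposing the current partial sum. -/
lemma exists_signs_greedy (s : V → ℤ) (θ r : ℤ) (T : Finset V)
    (hs : ∀ x ∈ T, 0 ≤ s x ∧ s x < θ) :
    ∃ τ : V → ℤ, (∀ x, τ x = 1 ∨ τ x = -1) ∧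
      (|r + ∑ x ∈ T, τ x * s x| < θ ∨ |r + ∑ x ∈ T, τ x * s x| ≤ |r| - ∑ x ∈ T, s x) := by
  induction T using Finset.induction_on with
  | empty => exact ⟨fun _ => 1, by simp⟩
  | insert a T ha ih =>
    obtain ⟨τ, hτ, h⟩ := ih fun x hx => hs x (mem_insert_of_mem hx)
    obtain ⟨h0, h1⟩ := hs a (mem_insert_self a T)
    have key : ∀ t : ℤ, ∑ x ∈ insert a T, Function.update τ a t x * s x
        = t * s a + ∑ x ∈ T, τ x * s x := by
      intro t
      rw [sum_insert ha, Function.update_self]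
      congr 1
      refine sum_congr rfl fun x hx => ?_
      rw [Function.update_of_ne (ne_of_mem_of_not_mem hx ha)]
    have sgn : ∀ t : ℤ, (t = 1 ∨ t = -1) → ∀ x,
        Function.update τ a t x = 1 ∨ Function.update τ a t x = -1 := by
      intro t ht x
      by_cases hx : x = a
      · subst hx; simpa using ht
      · simpa [Function.update_of_ne hx] using hτ x
    rcases le_total 0 (r + ∑ x ∈ T, τ x * s x) with hr | hr
    · refine ⟨Function.update τ a (-1), sgn _ (Or.inr rfl), ?_⟩
      rw [key, sum_insert ha]
      grind
    · refine ⟨Function.update τ a 1, sgn _ (Or.inl rfl), ?_⟩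
      rw [key, sum_insert ha]
      grind

/-- An even number of values in `[θ, 2θ)` has a signed sum of absolute value below `θ`. -/
lemma exists_signs_of_even_card (s : V → ℤ) (θ : ℤ) (hθ : 0 < θ) (k : ℕ) :
    ∀ T : Finset V, T.card = 2 * k → (∀ x ∈ T, θ ≤ s x ∧ s x < 2 * θ) →
      ∃ τ : V → ℤ, (∀ x, τ x = 1 ∨ τ x = -1) ∧ |∑ x ∈ T, τ x * s x| < θ := by
  induction k with
  | zero =>
    intro T hT _
    obtain rfl : T = ∅ := by simpa using hT
    exact ⟨fun _ => 1, by simp, by simpa using hθ⟩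
  | succ k ih =>
    intro T hT hs
    obtain ⟨a, T₁, ha, rfl, hT₁⟩ := card_eq_succ.1 (show T.card = (2 * k + 1) + 1 by omega)
    obtain ⟨b, T₂, hb, rfl, hT₂⟩ := card_eq_succ.1 hT₁
    obtain ⟨τ, hτ, h⟩ := ih T₂ hT₂ fun x hx => hs x (by simp [hx])
    have hab : a ≠ b := fun h => ha (by simp [h])
    have haT : a ∉ T₂ := fun h => ha (by simp [h])
    have key : ∀ t : ℤ, ∑ x ∈ insert a (insert b T₂),
        (if x = a then t else if x = b then -t else τ x) * s x
          = t * s a + (-t * s b + ∑ x ∈ T₂, τ x * s x) := by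
      intro t
      rw [sum_insert ha, sum_insert hb, if_pos rfl, if_neg hab.symm, if_pos rfl]
      congr 2
      refine sum_congr rfl fun x hx => ?_
      rw [if_neg (ne_of_mem_of_not_mem hx haT), if_neg (ne_of_mem_of_not_mem hx hb)]
    have h1 := hs a (by simp)
    have h2 := hs b (by simp)
    have ex : ∃ t : ℤ, (t = 1 ∨ t = -1) ∧
        |t * s a + (-t * s b + ∑ x ∈ T₂, τ x * s x)| < θ := by
      by_cases h3 : |1 * s a + (-1 * s b + ∑ x ∈ T₂, τ x * s x)| < θ
      · exact ⟨1, Or.inl rfl, h3⟩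
      · refine ⟨-1, Or.inr rfl, ?_⟩
        grind
    obtain ⟨t, ht, h3⟩ := ex
    refine ⟨fun x => if x = a then t else if x = b then -t else τ x, ?_, by rwa [key]⟩
    intro x
    have := hτ x
    grind

/-- If the signed sums of `2k+1` values from `[θ, 2θ)` all have absolute value at least `θ`, then
making exactly the `k` largest values negative leaves a positive sum. -/
lemma sum_sub_two_mul_largest_pos (f : ℕ → ℤ) (θ : ℤ) (hθ : 0 < θ) (k : ℕ)
    (hf : ∀ i ∈ Icc 1 (2 * k + 1), θ ≤ f i ∧ f i < 2 * θ)
    (hmono : ∀ i ∈ Icc 1 (2 * k + 1), ∀ j ∈ Icc 1 (2 * k + 1), i ≤ j → f j ≤ f i)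
    (hsum : ∀ B ⊆ Icc 1 (2 * k + 1),
      θ ≤ |∑ j ∈ Icc 1 (2 * k + 1), f j - 2 * ∑ j ∈ B, f j|) :
    0 < ∑ j ∈ Icc 1 (2 * k + 1), f j - 2 * ∑ j ∈ Icc 1 k, f j := by
  have hI : ∀ a b : ℕ, ∑ j ∈ Ico a (a + b), f j = ∑ j ∈ range b, f (a + j) := by
    intro a b
    rw [sum_Ico_eq_sum_range, Nat.add_sub_cancel_left]
  have htot : ∑ j ∈ Icc 1 (2 * k + 1), f j
      = ∑ j ∈ Ico 1 (1 + k), f j + f (k + 1) + ∑ j ∈ Ico (k + 2) (k + 2 + k), f j := by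
    have hIcc : Icc 1 (2 * k + 1) = Ico 1 (k + 2 + k) := by ext; simp; omega
    rw [hIcc, ← sum_Ico_consecutive f (show 1 ≤ 1 + k by omega)
      (show 1 + k ≤ k + 2 + k by omega),
      sum_eq_sum_Ico_succ_bot (show 1 + k < k + 2 + k by omega),
      show 1 + k + 1 = k + 2 by omega, add_comm k 1, ← add_assoc]
  have hwin : Icc 1 k = Ico 1 (1 + k) := by ext; simp; omega
  rw [hwin]
  by_contra hneg
  have slide : ∀ i, i ≤ k + 1 →
      ∑ j ∈ Icc 1 (2 * k + 1), f j - 2 * ∑ j ∈ Ico (i + 1) (i + 1 + k), f j ≤ 0 := by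
    intro i
    induction i with
    | zero => intro _; simpa using hneg
    | succ i ih =>
      intro hi
      have h1 := ih (by omega)
      have h2 := hsum (Ico (i + 1) (i + 1 + k)) (by intro x; simp; omega)
      have h3 := hsum (Ico (i + 1 + 1) (i + 1 + 1 + k)) (by intro x; simp; omega)
      have h4 : ∑ j ∈ Ico (i + 1) (i + 1 + k), f j + f (i + 1 + k)
          = f (i + 1) + ∑ j ∈ Ico (i + 1 + 1) (i + 1 + 1 + k), f j := by
        rw [← sum_Ico_succ_top (by omega), sum_eq_sum_Ico_succ_bot (by omega)]
        congr 3
        omega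
      have h5 := hf (i + 1) (by simp; omega)
      have h6 := hf (i + 1 + k) (by simp; omega)
      grind
  have hlast := slide (k + 1) le_rfl
  have hle : ∑ j ∈ Ico (k + 2) (k + 2 + k), f j ≤ ∑ j ∈ Ico 1 (1 + k), f j := by
    rw [hI, hI]
    refine sum_le_sum fun j hj => ?_
    rw [mem_range] at hj
    exact hmono _ (by simp; omega) _ (by simp; omega) (by omega)
  have hmid := hf (k + 1) (by simp; omega)
  have hlast' : ∑ j ∈ Icc 1 (2 * k + 1), f j
      - 2 * ∑ j ∈ Ico (k + 2) (k + 2 + k), f j ≤ 0 := hlast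
  linarith

end Signs

/-- Coordinates of a quadratic form can be rounded from `0` to `±1` on `T` at the cost of the
diagonal entries. -/
lemma exists_rounding {V : Type} [Fintype V] [DecidableEq V] (M : V → V → ℝ) (σ₀ : V → ℝ)
    (T : Finset V) (h0 : ∀ y ∈ T, σ₀ y = 0) :
    ∃ σ : V → ℝ, (∀ x, x ∉ T → σ x = σ₀ x) ∧ (∀ x ∈ T, σ x = 1 ∨ σ x = -1) ∧
      ∑ u, ∑ v, M u v * σ u * σ v ≤ ∑ u, ∑ v, M u v * σ₀ u * σ₀ v + ∑ y ∈ T, M y y := by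
  induction T using Finset.induction_on with
  | empty => exact ⟨σ₀, by simp⟩
  | insert a T ha ih =>
    obtain ⟨σ, h1, h2, h3⟩ := ih fun y hy => h0 y (mem_insert_of_mem hy)
    have hσa : σ a = 0 := by rw [h1 a ha, h0 a (mem_insert_self a T)]
    have hdiag : ∑ u, ∑ v, M u v * (Pi.single a (1 : ℝ) : V → ℝ) u
        * (Pi.single a (1 : ℝ) : V → ℝ) v = M a a := by
      simp [Pi.single_apply]
    have hpar : ∑ u, ∑ v, M u v * (σ u + (Pi.single a (1 : ℝ) : V → ℝ) u)
          * (σ v + (Pi.single a (1 : ℝ) : V → ℝ) v)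
        + ∑ u, ∑ v, M u v * (σ u - (Pi.single a (1 : ℝ) : V → ℝ) u)
          * (σ v - (Pi.single a (1 : ℝ) : V → ℝ) v)
        = 2 * ∑ u, ∑ v, M u v * σ u * σ v + 2 * M a a := by
      rw [← hdiag]
      simp only [mul_sum, ← sum_add_distrib]
      refine sum_congr rfl fun u _ => sum_congr rfl fun v _ => ?_
      ring
    rw [sum_insert ha]
    by_cases hc : ∑ u, ∑ v, M u v * (σ u + (Pi.single a (1 : ℝ) : V → ℝ) u)
          * (σ v + (Pi.single a (1 : ℝ) : V → ℝ) v)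
        ≤ ∑ u, ∑ v, M u v * σ u * σ v + M a a
    · refine ⟨fun x => σ x + (Pi.single a (1 : ℝ) : V → ℝ) x, ?_, ?_, by linarith⟩
      · intro x hx
        rw [mem_insert, not_or] at hx
        simp [h1 x hx.2, hx.1]
      · intro x hx
        by_cases hxa : x = a
        · subst hxa; simp [hσa]
        · simpa [hxa] using h2 x ((mem_insert.1 hx).resolve_left hxa)
    · refine ⟨fun x => σ x - (Pi.single a (1 : ℝ) : V → ℝ) x, ?_, ?_, by linarith⟩
      · intro x hx
        rw [mem_insert, not_or] at hx
        simp [h1 x hx.2, hx.1]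
      · intro x hx
        by_cases hxa : x = a
        · subst hxa; simp [hσa]
        · simpa [hxa] using h2 x ((mem_insert.1 hx).resolve_left hxa)

section Digraph

variable {V : Type} [Fintype V] (A : V → V → Prop) [DecidableRel A]

lemma outDeg_eq_sum (x : V) : outDeg A x = ∑ v, if A x v then 1 else 0 := by
  rw [outDeg, card_filter]

lemma inDeg_eq_sum (x : V) : inDeg A x = ∑ v, if A v x then 1 else 0 := by
  rw [inDeg, card_filter]

lemma sVal_eq_abs (x : V) : sVal A x = |(outDeg A x : ℤ) - inDeg A x| := by
  rw [sVal, abs_eq_max_neg, neg_sub]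

variable [DecidableEq V]

lemma dArcs_eq_sum (S T : Finset V) :
    dArcs A S T = ∑ u ∈ S, ∑ v ∈ T, if A u v then 1 else 0 := by
  rw [dArcs, card_filter, sum_product]

lemma sum_outDeg : ∑ x, outDeg A x = dArcs A univ univ := by
  simp only [dArcs_eq_sum, outDeg_eq_sum]

lemma sum_inDeg : ∑ x, inDeg A x = dArcs A univ univ := by
  simp only [dArcs_eq_sum, inDeg_eq_sum]
  exact sum_comm

variable {A} {X Y : Finset V}

lemma not_arc_of_dArcs_eq_zero (heX : dArcs A X X = 0) {u v : V} (hu : u ∈ X) (hv : v ∈ X) :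
    ¬ A u v := by
  rw [dArcs, card_eq_zero, filter_eq_empty_iff] at heX
  exact heX (mem_product.2 ⟨hu, hv⟩ : (u, v) ∈ X ×ˢ X)

lemma outDeg_eq_sum_of_mem (hXY : X ∪ Y = univ) (hdXY : Disjoint X Y) (heX : dArcs A X X = 0)
    {x : V} (hx : x ∈ X) : outDeg A x = ∑ v ∈ Y, if A x v then 1 else 0 := by
  rw [outDeg_eq_sum, ← hXY, sum_union hdXY, add_eq_right]
  exact sum_eq_zero fun v hv => if_neg (not_arc_of_dArcs_eq_zero heX hx hv)

lemma inDeg_eq_sum_of_mem (hXY : X ∪ Y = univ) (hdXY : Disjoint X Y) (heX : dArcs A X X = 0)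
    {x : V} (hx : x ∈ X) : inDeg A x = ∑ v ∈ Y, if A v x then 1 else 0 := by
  rw [inDeg_eq_sum, ← hXY, sum_union hdXY, add_eq_right]
  exact sum_eq_zero fun v hv => if_neg (not_arc_of_dArcs_eq_zero heX hv hx)

lemma sVal_le_card (hXY : X ∪ Y = univ) (hdXY : Disjoint X Y) (heX : dArcs A X X = 0)
    {x : V} (hx : x ∈ X) : sVal A x ≤ Y.card := by
  have h1 : outDeg A x ≤ Y.card := by
    rw [outDeg_eq_sum_of_mem hXY hdXY heX hx, ← card_filter]
    exact card_filter_le _ _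
  have h2 : inDeg A x ≤ Y.card := by
    rw [inDeg_eq_sum_of_mem hXY hdXY heX hx, ← card_filter]
    exact card_filter_le _ _
  rw [sVal]
  omega

lemma gap_eq_sum (hXY : X ∪ Y = univ) (hdXY : Disjoint X Y) (heX : dArcs A X X = 0)
    {X₁ : Finset V} (h : X₁ ⊆ X) :
    gap A X₁ (X \ X₁) Y
      = ∑ x ∈ X, (if x ∈ X₁ then 1 else -1) * ((outDeg A x : ℤ) - inDeg A x) := by
  have hO : ∀ S ⊆ X, (dArcs A S Y : ℤ) = ∑ x ∈ S, (outDeg A x : ℤ) := by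
    intro S hS
    rw [dArcs_eq_sum, Nat.cast_sum]
    exact sum_congr rfl fun x hx => by rw [outDeg_eq_sum_of_mem hXY hdXY heX (hS hx)]
  have hN : ∀ S ⊆ X, (dArcs A Y S : ℤ) = ∑ x ∈ S, (inDeg A x : ℤ) := by
    intro S hS
    rw [dArcs_eq_sum, sum_comm, Nat.cast_sum]
    exact sum_congr rfl fun x hx => by rw [inDeg_eq_sum_of_mem hXY hdXY heX (hS hx)]
  have e1 : ∑ x ∈ X₁, (if x ∈ X₁ then (1 : ℤ) else -1) * ((outDeg A x : ℤ) - inDeg A x)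
      = ∑ x ∈ X₁, (outDeg A x : ℤ) - ∑ x ∈ X₁, (inDeg A x : ℤ) := by
    rw [← sum_sub_distrib]
    exact sum_congr rfl fun x hx => by rw [if_pos hx, one_mul]
  have e2 : ∑ x ∈ X \ X₁, (if x ∈ X₁ then (1 : ℤ) else -1) * ((outDeg A x : ℤ) - inDeg A x)
      = ∑ x ∈ X \ X₁, (inDeg A x : ℤ) - ∑ x ∈ X \ X₁, (outDeg A x : ℤ) := by
    rw [← sum_sub_distrib]
    exact sum_congr rfl fun x hx => by rw [if_neg (mem_sdiff.1 hx).2]; ring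
  rw [← sum_sdiff h, e1, e2, gap, hO _ h, hN _ h, hO _ sdiff_subset, hN _ sdiff_subset]
  ring

/-- Every signed sum of the values `sVal` over `X` is, up to sign, a gap. -/
lemma le_abs_signed_sum (hXY : X ∪ Y = univ) (hdXY : Disjoint X Y) (heX : dArcs A X X = 0)
    {θ : ℤ} (hθ : θ ∈ lowerBounds {t : ℤ | ∃ X₁ ⊆ X, t = |gap A X₁ (X \ X₁) Y|})
    (τ : V → ℤ) (hτ : ∀ x, τ x = 1 ∨ τ x = -1) : θ ≤ |∑ x ∈ X, τ x * sVal A x| := by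
  have h := hθ ⟨X.filter fun x => τ x = 1 ↔ inDeg A x ≤ outDeg A x, filter_subset _ _, rfl⟩
  rw [gap_eq_sum hXY hdXY heX (filter_subset _ _)] at h
  refine h.trans_eq (congrArg _ (sum_congr rfl fun x hx => ?_))
  have := hτ x
  simp only [mem_filter, hx, true_and, sVal]
  rcases le_total (inDeg A x) (outDeg A x) with h1 | h1
  · rw [max_eq_left (by omega)]
    rcases this with h2 | h2 <;> simp [h1, h2]
  · rw [max_eq_right (by omega)]
    by_cases h3 : inDeg A x ≤ outDeg A x
    · have h4 : inDeg A x = outDeg A x := le_antisymm h3 h1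
      simp [h4]
    · rcases this with h2 | h2 <;> simp [h3, h2]

/-- A partition of `X` with small gap extends to a bipartition of the digraph with many arcs in
both directions, provided the degrees in `Y` are small. -/
lemma exists_bipartition (hirr : ∀ v, ¬ A v v) (hXY : X ∪ Y = univ) (hdXY : Disjoint X Y)
    (heX : dArcs A X X = 0) {X₁ : Finset V} (hX₁ : X₁ ⊆ X) {ε : ℝ} (hε : 0 < ε)
    (hdeg : ∀ y ∈ Y, (deg A y : ℝ) ≤ ε ^ 2 * dArcs A univ univ / 4) :
    ∃ V₁ V₂ : Finset V, V₁ ∪ V₂ = univ ∧ Disjoint V₁ V₂ ∧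
      (dArcs A univ univ - |(gap A X₁ (X \ X₁) Y : ℝ)|) / 4 - ε * dArcs A univ univ ≤
        min (dArcs A V₁ V₂ : ℝ) (dArcs A V₂ V₁ : ℝ) := by
  set m : ℝ := (dArcs A univ univ : ℝ) with hm
  rcases (show (0 : ℝ) ≤ m from Nat.cast_nonneg _).eq_or_lt with hm0 | hm0
  · refine ⟨univ, ∅, by simp, by simp, ?_⟩
    rw [← hm0]
    refine le_trans ?_ (le_min (Nat.cast_nonneg _) (Nat.cast_nonneg _))
    have := abs_nonneg (gap A X₁ (X \ X₁) Y : ℝ)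
    linarith
  have hXc : ∀ x, x ∉ Y ↔ x ∈ X := by
    intro x
    have h1 : x ∈ X ∪ Y := hXY ▸ mem_univ x
    have h2 : x ∈ X → x ∉ Y := fun h => disjoint_left.1 hdXY h
    rw [mem_union] at h1
    tauto
  set a : V → V → ℝ := fun u v => if A u v then 1 else 0 with ha
  set s : V → ℝ := fun x => (outDeg A x : ℝ) - inDeg A x with hs
  set σ₀ : V → ℝ := fun x => if x ∈ Y then 0 else if x ∈ X₁ then 1 else -1 with hσ₀
  set t : V → ℝ := fun x => if x ∈ Y then s x else 0 with ht
  have hc : 0 < ε * m := mul_pos hε hm0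
  obtain ⟨σ, hσX, hσY, hσ⟩ := exists_rounding (fun u v => a u v + t u * t v / (2 * (ε * m))) σ₀ Y
    (fun y hy => by simp [hσ₀, hy])
  have split : ∀ ρ : V → ℝ, ∑ u, ∑ v, (a u v + t u * t v / (2 * (ε * m))) * ρ u * ρ v
      = ∑ u, ∑ v, a u v * ρ u * ρ v + (∑ u, t u * ρ u) ^ 2 / (2 * (ε * m)) := by
    intro ρ
    rw [sq, sum_mul_sum, sum_div, ← sum_add_distrib]
    refine sum_congr rfl fun u _ => ?_
    rw [sum_div, ← sum_add_distrib]
    refine sum_congr rfl fun v _ => ?_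
    ring
  have hQ0 : ∑ u, ∑ v, a u v * σ₀ u * σ₀ v = 0 := by
    refine sum_eq_zero fun u _ => sum_eq_zero fun v _ => ?_
    by_cases hu : u ∈ Y
    · simp [hσ₀, hu]
    by_cases hv : v ∈ Y
    · simp [hσ₀, hv]
    · simp [ha, not_arc_of_dArcs_eq_zero heX ((hXc u).1 hu) ((hXc v).1 hv)]
  have hL0 : ∑ u, t u * σ₀ u = 0 := by
    refine sum_eq_zero fun u _ => ?_
    by_cases hu : u ∈ Y <;> simp [hσ₀, ht, hu]
  have hdegsum : ∑ y ∈ Y, (deg A y : ℝ) ≤ 2 * m := by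
    calc ∑ y ∈ Y, (deg A y : ℝ) ≤ ∑ y, (deg A y : ℝ) :=
          sum_le_sum_of_subset_of_nonneg (subset_univ _) fun _ _ _ => Nat.cast_nonneg _
      _ = 2 * m := by
          rw [hm, ← Nat.cast_sum]
          simp only [deg, sum_add_distrib, sum_outDeg, sum_inDeg]
          push_cast
          ring
  have hD : ∑ y ∈ Y, (a y y + t y * t y / (2 * (ε * m))) ≤ ε * m / 4 := by
    have h1 : ∀ y ∈ Y, a y y + t y * t y / (2 * (ε * m))
        ≤ (deg A y : ℝ) * (ε / 8) := by
      intro y hy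
      have h2 : a y y = 0 := by simp [ha, hirr y]
      have h3 : t y = s y := by simp [ht, hy]
      have h4 : |s y| ≤ (deg A y : ℝ) := by
        have := Nat.cast_nonneg (α := ℝ) (outDeg A y)
        have := Nat.cast_nonneg (α := ℝ) (inDeg A y)
        rw [abs_le]
        simp only [hs, deg]
        push_cast
        constructor <;> linarith
      have h5 : s y * s y ≤ (deg A y : ℝ) * (ε ^ 2 * m / 4) := by
        rw [← abs_mul_abs_self]
        exact mul_le_mul h4 (h4.trans (hdeg y hy)) (abs_nonneg _) (Nat.cast_nonneg _)
      rw [h2, h3, zero_add, div_le_iff₀ (by positivity)]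
      exact h5.trans_eq (by ring)
    calc _ ≤ ∑ y ∈ Y, (deg A y : ℝ) * (ε / 8) := sum_le_sum h1
      _ = (∑ y ∈ Y, (deg A y : ℝ)) * (ε / 8) := by rw [sum_mul]
      _ ≤ 2 * m * (ε / 8) := by gcongr
      _ = ε * m / 4 := by ring
  rw [split, split, hQ0, hL0] at hσ
  have hsgn : ∀ x, σ x = 1 ∨ σ x = -1 := by
    intro x
    by_cases hx : x ∈ Y
    · exact hσY x hx
    · rw [hσX x hx]
      by_cases hx1 : x ∈ X₁ <;> simp [hσ₀, hx, hx1]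
  have hgap : ∑ x, s x * σ x = gap A X₁ (X \ X₁) Y + ∑ u, t u * σ u := by
    have h1 : ∑ u, t u * σ u = ∑ u ∈ Y, s u * σ u := by
      simp [ht, ite_mul, sum_ite_mem]
    rw [gap_eq_sum hXY hdXY heX hX₁, h1, ← hXY, sum_union hdXY]
    push_cast
    congr 1
    refine sum_congr rfl fun x hx => ?_
    rw [hσX x ((hXc x).2 hx)]
    simp only [hσ₀, hs, (hXc x).2 hx, if_false]
    ring
  have hlin : ∑ u, ∑ v, a u v * (σ u - σ v) = ∑ x, s x * σ x := by
    simp only [mul_sub, sum_sub_distrib, hs, sub_mul]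
    congr 1
    · refine sum_congr rfl fun u _ => ?_
      rw [outDeg_eq_sum, ← sum_mul]
      push_cast
      rfl
    · rw [sum_comm]
      refine sum_congr rfl fun u _ => ?_
      rw [inDeg_eq_sum, ← sum_mul]
      push_cast
      rfl
  have hma : m = ∑ u, ∑ v, a u v := by
    rw [hm, dArcs_eq_sum]
    push_cast
    rfl
  have hcount : ∀ ρ : V → ℝ, (∀ x, ρ x = 1 ∨ ρ x = -1) →
      (dArcs A (univ.filter fun x => ρ x = 1) (univ.filter fun x => ¬ ρ x = 1) : ℝ)
        = (m + ∑ u, ∑ v, a u v * (ρ u - ρ v) - ∑ u, ∑ v, a u v * ρ u * ρ v) / 4 := by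
    intro ρ hρ
    rw [dArcs_eq_sum, sum_filter, hma, ← sum_add_distrib, ← sum_sub_distrib, sum_div]
    push_cast
    refine sum_congr rfl fun u _ => ?_
    rw [← sum_add_distrib, ← sum_sub_distrib, sum_div, sum_filter]
    have hne : ¬ (-1 : ℝ) = 1 := by norm_num
    rcases hρ u with hu | hu
    · rw [if_pos hu, hu]
      refine sum_congr rfl fun v _ => ?_
      rcases hρ v with hv | hv
      · rw [hv, if_neg (by simp)]; ring
      · rw [hv, if_pos hne]; simp only [ha]; split_ifs <;> norm_num
    · rw [hu, if_neg hne]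
      refine (sum_eq_zero fun v _ => ?_).symm
      rcases hρ v with hv | hv <;> rw [hv] <;> ring
  refine ⟨univ.filter fun x => σ x = 1, univ.filter fun x => ¬ σ x = 1,
    filter_union_filter_not_eq _ _, disjoint_filter_filter_not _ _ _, ?_⟩
  have hneg := hcount (fun x => -σ x) fun x => by
    rcases hsgn x with h | h <;> simp [h]
  have hswap : (dArcs A (univ.filter fun x => ¬ σ x = 1) (univ.filter fun x => σ x = 1) : ℝ)
      = (m - ∑ u, ∑ v, a u v * (σ u - σ v) - ∑ u, ∑ v, a u v * σ u * σ v) / 4 := by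
    have e1 : (univ.filter fun x => -σ x = 1) = univ.filter fun x => ¬ σ x = 1 := by
      refine filter_congr fun x _ => ?_
      rcases hsgn x with h | h <;> rw [h] <;> norm_num
    have e2 : (univ.filter fun x => ¬ -σ x = 1) = univ.filter fun x => σ x = 1 := by
      refine filter_congr fun x _ => ?_
      rcases hsgn x with h | h <;> rw [h] <;> norm_num
    rw [e1, e2] at hneg
    rw [hneg, sub_eq_add_neg m, ← sum_neg_distrib]
    congr 3
    · refine sum_congr rfl fun u _ => ?_
      rw [← sum_neg_distrib]
      exact sum_congr rfl fun v _ => by ring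
    · funext u
      exact sum_congr rfl fun v _ => by ring
  rw [hswap, hcount σ hsgn, hlin, hgap]
  set L : ℝ := ∑ u, t u * σ u
  set G : ℝ := (gap A X₁ (X \ X₁) Y : ℝ)
  set Q : ℝ := ∑ u, ∑ v, a u v * σ u * σ v
  have hLabs : |L| ≤ L ^ 2 / (2 * (ε * m)) + ε * m / 2 := by
    have h1 : L ^ 2 / (2 * (ε * m)) + ε * m / 2 - |L| = (|L| - ε * m) ^ 2 / (2 * (ε * m)) := by
      rw [← sq_abs L]
      field_simp
      ring
    have h2 : 0 ≤ (|L| - ε * m) ^ 2 / (2 * (ε * m)) := by positivity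
    linarith
  have hQL : Q + |L| ≤ ε * m := by
    simp only [ne_eq, OfNat.ofNat_ne_zero, not_false_eq_true, zero_pow, zero_div, add_zero,
      zero_add] at hσ
    linarith
  have := abs_add_le G L
  have h1 := le_abs_self (G + L)
  have h2 := neg_abs_le (G + L)
  refine le_min ?_ ?_ <;> linarith

end Digraph

/-- Lemma 3.1(3). -/
theorem stmt7 {V : Type} [Fintype V] [DecidableEq V] (A : V → V → Prop) [DecidableRel A]
    (hirr : ∀ v, ¬ A v v)
    (m : ℕ) (hm : m = dArcs A Finset.univ Finset.univ)
    (d : ℕ) (hd : 4 ≤ d) (hout : ∀ x, d ≤ outDeg A x)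
    (X Y : Finset V) (hXY : X ∪ Y = Finset.univ) (hdXY : Disjoint X Y)
    (heX : dArcs A X X = 0)
    (θ : ℤ) (hθ : IsLeast {t : ℤ | ∃ X₁ ⊆ X, t = |gap A X₁ (X \ X₁) Y|} θ)
    (X' : Finset V) (hX' : X' = X.filter fun x => θ ≤ sVal A x)
    (g : ℤ) (hg : g = ∑ x ∈ X \ X', sVal A x)
    (ε : ℝ) (hε : 0 < ε) (hdeg : ∀ y ∈ Y, (deg A y : ℝ) ≤ ε ^ 2 * m / 4)
    :
    (∃ V₁ V₂ : Finset V, V₁ ∪ V₂ = Finset.univ ∧ Disjoint V₁ V₂ ∧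
        (((d : ℝ) - 1) / (2 * (2 * (d : ℝ) - 1)) - ε) * m ≤
          min (dArcs A V₁ V₂ : ℝ) (dArcs A V₂ V₁ : ℝ)) ∨
      ∃ k : ℕ, X'.card = 2 * k + 1 ∧
        ∀ v : ℕ → V,
          X' = (Finset.Icc 1 (2 * k + 1)).image v →
          Set.InjOn v ↑(Finset.Icc 1 (2 * k + 1)) →
          (∀ i ∈ Finset.Icc 1 (2 * k + 1), ∀ j ∈ Finset.Icc 1 (2 * k + 1), i ≤ j →
            sVal A (v j) ≤ sVal A (v i)) →
          g + θ ≤ (∑ j ∈ Finset.Icc (k + 1) (2 * k + 1), sVal A (v j)) -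
            (∑ j ∈ Finset.Icc 1 k, sVal A (v j)) := by
  obtain ⟨⟨X₁, hX₁, hθeq⟩, hlow⟩ := hθ
  by_cases hsmall : (2 * (d : ℤ) - 1) * θ ≤ m
  · left
    subst hm
    obtain ⟨V₁, V₂, h1, h2, h3⟩ := exists_bipartition hirr hXY hdXY heX hX₁ hε hdeg
    refine ⟨V₁, V₂, h1, h2, le_trans ?_ h3⟩
    have hd' : (4 : ℝ) ≤ d := by exact_mod_cast hd
    have hθR : |(gap A X₁ (X \ X₁) Y : ℝ)| = θ := by rw [hθeq]; push_cast; rfl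
    have hsR : (2 * (d : ℝ) - 1) * θ ≤ dArcs A univ univ := by exact_mod_cast hsmall
    have hpos : (0 : ℝ) < 2 * d - 1 := by linarith
    have hθle : (θ : ℝ) ≤ dArcs A univ univ / (2 * d - 1) := by
      rw [le_div_iff₀ hpos]
      linarith
    have hne := hpos.ne'
    have hcoef : ((d : ℝ) - 1) / (2 * (2 * d - 1)) * dArcs A univ univ
        = (dArcs A univ univ - dArcs A univ univ / (2 * (d : ℝ) - 1)) / 4 := by
      have hd1 : (d : ℝ) - 1 = ((2 * (d : ℝ) - 1) - 1) / 2 := by ring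
      rw [hd1]
      generalize 2 * (d : ℝ) - 1 = e at hne ⊢
      field_simp
      ring
    rw [hθR, sub_mul, hcoef]
    linarith
  right
  have hθ0 : 0 < θ := by
    rw [not_le] at hsmall
    exact pos_of_mul_pos_right ((Nat.cast_nonneg m).trans_lt hsmall) (by omega)
  have hYθ : (Y.card : ℤ) < 2 * θ := by
    have h1 : d * Y.card ≤ m := by
      rw [hm, ← sum_outDeg, mul_comm, ← smul_eq_mul]
      exact (card_nsmul_le_sum Y _ d fun x _ => hout x).trans
        (sum_le_sum_of_subset (subset_univ _))
    have h2 : (d : ℤ) * Y.card ≤ m := by exact_mod_cast h1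
    have h3 : (4 : ℤ) ≤ d := by exact_mod_cast hd
    nlinarith
  have hX'X : X' ⊆ X := hX' ▸ filter_subset _ _
  have hrange : ∀ x ∈ X', θ ≤ sVal A x ∧ sVal A x < 2 * θ := by
    intro x hx
    refine ⟨?_, (sVal_le_card hXY hdXY heX (hX'X hx)).trans_lt hYθ⟩
    rw [hX'] at hx
    exact (mem_filter.1 hx).2
  have hrest : ∀ x ∈ X \ X', 0 ≤ sVal A x ∧ sVal A x < θ := by
    intro x hx
    rw [mem_sdiff, hX', mem_filter, not_and, not_le] at hx
    exact ⟨by rw [sVal_eq_abs]; exact abs_nonneg _, hx.2 hx.1⟩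
  have hsigned : ∀ τ : V → ℤ, (∀ x, τ x = 1 ∨ τ x = -1) →
      g + θ ≤ |∑ x ∈ X', τ x * sVal A x| := by
    intro τ hτ
    obtain ⟨ρ, hρ, h⟩ := exists_signs_greedy (sVal A) θ (∑ x ∈ X', τ x * sVal A x) (X \ X') hrest
    have h1 := le_abs_signed_sum hXY hdXY heX hlow (fun x => if x ∈ X' then τ x else ρ x)
      fun x => by by_cases hx : x ∈ X' <;> simp [hx, hτ x, hρ x]
    have h2 : ∑ x ∈ X, (if x ∈ X' then τ x else ρ x) * sVal A x
        = ∑ x ∈ X', τ x * sVal A x + ∑ x ∈ X \ X', ρ x * sVal A x := by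
      rw [← sum_sdiff hX'X, add_comm]
      congr 1
      · exact sum_congr rfl fun x hx => by rw [if_pos hx]
      · exact sum_congr rfl fun x hx => by rw [if_neg (mem_sdiff.1 hx).2]
    rw [h2] at h1
    rcases h with h | h
    · exact absurd h1 (not_le.2 h)
    · rw [hg]
      linarith
  have hg0 : 0 ≤ g := hg ▸ sum_nonneg fun x hx => (hrest x hx).1
  rcases Nat.even_or_odd' X'.card with ⟨k, hk | hk⟩
  · obtain ⟨τ, hτ, h⟩ := exists_signs_of_even_card (sVal A) θ hθ0 k X' hk hrange
    have := hsigned τ hτ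
    linarith
  refine ⟨k, hk, fun v hv hinj hanti => ?_⟩
  have hflip : ∀ B ⊆ Icc 1 (2 * k + 1), g + θ ≤
      |∑ j ∈ Icc 1 (2 * k + 1), sVal A (v j) - 2 * ∑ j ∈ B, sVal A (v j)| := by
    intro B hB
    have h1 := hsigned (fun x => if x ∈ B.image v then -1 else 1)
      fun x => by by_cases hx : x ∈ B.image v <;> simp only [hx, if_true, if_false] <;> simp
    have hsub : B.image v ⊆ X' := hv ▸ image_subset_image hB
    have h2 : ∑ x ∈ X', (if x ∈ B.image v then (-1 : ℤ) else 1) * sVal A x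
        = ∑ x ∈ X', sVal A x - 2 * ∑ x ∈ B.image v, sVal A x := by
      rw [← sum_sdiff hsub, ← sum_sdiff (f := fun x => sVal A x) hsub,
        sum_congr (g := fun x => sVal A x) (s₁ := X' \ B.image v) rfl
          fun x hx => by rw [if_neg (mem_sdiff.1 hx).2, one_mul],
        sum_congr (g := fun x => -sVal A x) (s₁ := B.image v) rfl
          fun x hx => by rw [if_pos hx, neg_one_mul], sum_neg_distrib]
      ring
    rw [h2, sum_image (hinj.mono (by exact_mod_cast hB)), hv, sum_image hinj] at h1
    exact h1
  have hpos := sum_sub_two_mul_largest_pos (fun j => sVal A (v j)) θ hθ0 k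
    (fun i hi => hrange _ (hv ▸ mem_image_of_mem v hi)) hanti
    fun B hB => by have := hflip B hB; linarith
  have hmain := hflip (Icc 1 k) (Icc_subset_Icc_right (by omega))
  rw [abs_of_pos hpos] at hmain
  have hdecomp : ∑ j ∈ Icc 1 (2 * k + 1), sVal A (v j)
      = ∑ j ∈ Icc (k + 1) (2 * k + 1), sVal A (v j) + ∑ j ∈ Icc 1 k, sVal A (v j) := by
    rw [← sum_union (disjoint_left.2 fun x => by simp only [mem_Icc]; omega)]
    exact sum_congr (by ext; simp only [mem_union, mem_Icc]; omega) fun _ _ => rfl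
  linarith
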